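/- arXiv:1506.07756 — 3 statements merged into one kernel-verified Lean document; each statement's English description precedes it below -/
import Mathlib

section
/- Let V_A and V_B be finite-dimensional complex inner-product spaces, let v ∈ V_A ⊗ V_B, and let M_A be a linear operator on V_A such that (M_A ⊗ I_B) v = λ v for some λ ∈ ℂ. Then (M_A ⊗ I_B) v' = λ v' for every v' ∈ Σ_A(v) ⊗ V_B. In particular, if (M_A ⊗ I_B) v = 0 then Σ_A(v) ⊗ V_B ⊆ ker(M_A ⊗ I_B), and if (M_A ⊗ I_B) v = v then every element of Σ_A(v) ⊗ V_B is fixed by M_A ⊗ I_B. -/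
namespace QDS

open Matrix
open scoped ComplexOrder

/-! ### Basic single-system notions -/

section Single

variable {ι : Type*} [Fintype ι] [DecidableEq ι]

open Classical in
/-- The (unique) positive-semidefinite square root of a positive-semidefinite matrix
(junk value `0` if no positive-semidefinite square root exists). -/
noncomputable def msqrt (A : Matrix ι ι ℂ) : Matrix ι ι ℂ :=
  if h : ∃ B : Matrix ι ι ℂ, B.PosSemidef ∧ B * B = A then h.choose else 0

open Classical in
/-- The Moore–Penrose pseudoinverse of a matrix, defined via its characterizing
properties (it always exists and is unique for complex matrices). -/
noncomputable def mpinv (A : Matrix ι ι ℂ) : Matrix ι ι ℂ :=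
  if h : ∃ B : Matrix ι ι ℂ,
      A * B * A = A ∧ B * A * B = B ∧ (A * B)ᴴ = A * B ∧ (B * A)ᴴ = B * A
  then h.choose else 0

/-- A density operator: positive semidefinite with unit trace. -/
def IsDensity (ρ : Matrix ι ι ℂ) : Prop := ρ.PosSemidef ∧ ρ.trace = 1

/-- A CPTP map in Kraus (operator-sum) form. -/
def IsCPTP (T : Matrix ι ι ℂ →ₗ[ℂ] Matrix ι ι ℂ) : Prop :=
  ∃ (m : ℕ) (M : Fin m → Matrix ι ι ℂ),
    (∀ X, T X = ∑ k, M k * X * (M k)ᴴ) ∧ (∑ k, (M k)ᴴ * M k) = 1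

/-- The Lindblad (QDS) generator with Hamiltonian `Hm` and noise operators `Lk`:
`L(X) = -i[Hm, X] + Σₖ (Lₖ X Lₖ† - ½{Lₖ†Lₖ, X})`. -/
noncomputable def lindbladMap (Hm : Matrix ι ι ℂ) {m : ℕ} (Lk : Fin m → Matrix ι ι ℂ) :
    Matrix ι ι ℂ →ₗ[ℂ] Matrix ι ι ℂ :=
  (-Complex.I) • (LinearMap.mulLeft ℂ Hm - LinearMap.mulRight ℂ Hm) +
    ∑ k, ((LinearMap.mulRight ℂ (Lk k)ᴴ).comp (LinearMap.mulLeft ℂ (Lk k)) -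
      ((1 : ℂ)/2) • (LinearMap.mulLeft ℂ ((Lk k)ᴴ * Lk k) +
        LinearMap.mulRight ℂ ((Lk k)ᴴ * Lk k)))

/-- `L` is a QDS (Lindblad) generator. -/
def IsLindblad (L : Matrix ι ι ℂ →ₗ[ℂ] Matrix ι ι ℂ) : Prop :=
  ∃ Hm : Matrix ι ι ℂ, Hm.IsHermitian ∧
    ∃ (m : ℕ) (Lk : Fin m → Matrix ι ι ℂ), L = lindbladMap Hm Lk

/-- `Ld` is the Hilbert–Schmidt adjoint of `L` (w.r.t. `⟨X,Y⟩ = Tr(X†Y)`). -/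
def IsHSAdjoint (L Ld : Matrix ι ι ℂ →ₗ[ℂ] Matrix ι ι ℂ) : Prop :=
  ∀ X Y : Matrix ι ι ℂ, ((Ld X)ᴴ * Y).trace = (Xᴴ * L Y).trace

/-- The fixed-point set of a (super)operator. -/
def fixSet (T : Matrix ι ι ℂ →ₗ[ℂ] Matrix ι ι ℂ) : Set (Matrix ι ι ℂ) := {X | T X = X}

/-- The support of an operator: the orthogonal complement of its kernel,
equivalently the range of its adjoint. -/
noncomputable def msupp (A : Matrix ι ι ℂ) : Submodule ℂ (ι → ℂ) := LinearMap.range (Aᴴ).mulVecLin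

/-- The support of a set of operators: the span of the union of their supports. -/
noncomputable def suppSet (W : Set (Matrix ι ι ℂ)) : Submodule ℂ (ι → ℂ) := ⨆ O ∈ W, msupp O

/-- The minimal modular-invariant distorted algebra generated by `W` relative to `ρ`:
the smallest subspace containing `W` that is closed under the adjoint, under the
`ρ`-modified product `(X,Y) ↦ X ρ⁻ Y`, and under the modular map `X ↦ ρ^{1/2} X ρ⁻^{1/2}`. -/
noncomputable def Fdist (ρ : Matrix ι ι ℂ) (W : Set (Matrix ι ι ℂ)) :
    Submodule ℂ (Matrix ι ι ℂ) :=
  sInf {S : Submodule ℂ (Matrix ι ι ℂ) | W ⊆ S ∧ (∀ X ∈ S, Xᴴ ∈ S) ∧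
    (∀ X ∈ S, ∀ Y ∈ S, X * mpinv ρ * Y ∈ S) ∧
    (∀ X ∈ S, msqrt ρ * X * mpinv (msqrt ρ) ∈ S)}

/-- `ρ` is globally asymptotically stable for the generator `L`: it is invariant and every
solution of `ẋ = L(x)` starting at a density operator converges to `ρ` as `t → ∞`. -/
def IsGAS (L : Matrix ι ι ℂ →ₗ[ℂ] Matrix ι ι ℂ) (ρ : Matrix ι ι ℂ) : Prop :=
  L ρ = 0 ∧
  ∀ σ : Matrix ι ι ℂ, IsDensity σ →
    ∀ x : ℝ → Matrix ι ι ℂ, x 0 = σ →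
      (∀ t : ℝ, ∀ i j, HasDerivAt (fun s : ℝ => x s i j) (L (x t) i j) t) →
      ∀ i j, Filter.Tendsto (fun t : ℝ => x t i j) Filter.atTop (nhds (ρ i j))

end Single

/-! ### Bipartite notions -/

section Bipartite

variable {α β : Type*} [Fintype α] [Fintype β] [DecidableEq α] [DecidableEq β]

/-- Partial trace over the second factor. -/
noncomputable def ptraceB (ρ : Matrix (α × β) (α × β) ℂ) : Matrix α α ℂ :=
  Matrix.of fun i j => ∑ k : β, ρ (i, k) (j, k)

/-- The operator Schmidt span of `ρ` on the first factor:
`{Tr_B[(I ⊗ B) ρ] : B ∈ B(H_B)}`. -/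
noncomputable def opSchmidtA (ρ : Matrix (α × β) (α × β) ℂ) : Set (Matrix α α ℂ) :=
  {A | ∃ B : Matrix β β ℂ,
    A = ptraceB ((Matrix.kroneckerMap (· * ·) (1 : Matrix α α ℂ) B) * ρ)}

/-- The (vector) Schmidt span of `v ∈ V_A ⊗ V_B` relative to `V_A`: the image of `v`
under partial inner products with vectors of `V_B`. -/
def vSchmidtA (v : α × β → ℂ) : Set (α → ℂ) :=
  {w | ∃ b : β → ℂ, w = fun a => ∑ j, (starRingEnd ℂ) (b j) * v (a, j)}

/-- `Σ_A(v) ⊗ V_B` as a subspace of `V_A ⊗ V_B`. -/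
noncomputable def extVSchmidtA (v : α × β → ℂ) : Submodule ℂ (α × β → ℂ) :=
  Submodule.span ℂ {v' | ∃ w ∈ vSchmidtA v, ∃ b : β → ℂ, v' = fun p => w p.1 * b p.2}

end Bipartite

/-! ### Multipartite notions -/

section Multipartite

variable {n : ℕ} {d : Fin n → Type*} [∀ a, Fintype (d a)] [∀ a, DecidableEq (d a)]

/-- Index type of the neighborhood factor `H_N`. -/
abbrev nbhdIdx (d : Fin n → Type*) (N : Finset (Fin n)) : Type _ :=
  ∀ a : {x : Fin n // x ∈ N}, d a

/-- Index type of the complementary factor `H_N̄`. -/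
abbrev nbhdCoIdx (d : Fin n → Type*) (N : Finset (Fin n)) : Type _ :=
  ∀ a : {x : Fin n // ¬ x ∈ N}, d a

/-- The factorization `H ≃ H_N ⊗ H_N̄` at the level of index types. -/
def splitEquiv (d : Fin n → Type*) (N : Finset (Fin n)) :
    (∀ a, d a) ≃ nbhdIdx d N × nbhdCoIdx d N :=
  Equiv.piEquivPiSubtypeProd (fun x => x ∈ N) d

variable (d)

/-- The operator `A ⊗ B` on `H = H_N ⊗ H_N̄`, viewed as an operator on `H`. -/
noncomputable def splitLift (N : Finset (Fin n))
    (A : Matrix (nbhdIdx d N) (nbhdIdx d N) ℂ)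
    (B : Matrix (nbhdCoIdx d N) (nbhdCoIdx d N) ℂ) :
    Matrix (∀ a, d a) (∀ a, d a) ℂ :=
  (Matrix.kroneckerMap (· * ·) A B).submatrix (splitEquiv d N) (splitEquiv d N)

/-- The neighborhood operator `A ⊗ I_N̄` on `H`. -/
noncomputable def nbhdLift (N : Finset (Fin n))
    (A : Matrix (nbhdIdx d N) (nbhdIdx d N) ℂ) : Matrix (∀ a, d a) (∀ a, d a) ℂ :=
  splitLift d N A 1

/-- The operator `I_N ⊗ B` on `H`. -/
noncomputable def coLift (N : Finset (Fin n))
    (B : Matrix (nbhdCoIdx d N) (nbhdCoIdx d N) ℂ) : Matrix (∀ a, d a) (∀ a, d a) ℂ :=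
  splitLift d N 1 B

/-- The reduced state `ρ_N = Tr_N̄(ρ)` on the neighborhood `N`. -/
noncomputable def nbhdPtrace (N : Finset (Fin n)) (ρ : Matrix (∀ a, d a) (∀ a, d a) ℂ) :
    Matrix (nbhdIdx d N) (nbhdIdx d N) ℂ :=
  Matrix.of fun i j => ∑ k : nbhdCoIdx d N,
    ρ ((splitEquiv d N).symm (i, k)) ((splitEquiv d N).symm (j, k))

/-- The operator Schmidt span of `ρ` on the neighborhood `N`:
`Σ_N(ρ) = {Tr_N̄[(I_N ⊗ B) ρ] : B}`. -/
noncomputable def nbhdSchmidt (N : Finset (Fin n)) (ρ : Matrix (∀ a, d a) (∀ a, d a) ℂ) :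
    Set (Matrix (nbhdIdx d N) (nbhdIdx d N) ℂ) :=
  {A | ∃ B : Matrix (nbhdCoIdx d N) (nbhdCoIdx d N) ℂ,
    A = nbhdPtrace d N (coLift d N B * ρ)}

/-- The extended minimal modular-invariant distorted algebra
`F_{ρ_N}(Σ_N(ρ)) ⊗ B(H_N̄)` as a subspace of `B(H)`. -/
noncomputable def extF (N : Finset (Fin n)) (ρ : Matrix (∀ a, d a) (∀ a, d a) ℂ) :
    Submodule ℂ (Matrix (∀ a, d a) (∀ a, d a) ℂ) :=
  Submodule.span ℂ {X | ∃ A ∈ Fdist (nbhdPtrace d N ρ) (nbhdSchmidt d N ρ),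
    ∃ B : Matrix (nbhdCoIdx d N) (nbhdCoIdx d N) ℂ, X = splitLift d N A B}

/-- A neighborhood QDS generator for `N`: a Lindblad generator whose Hamiltonian and
noise operators all act as `X_N ⊗ I_N̄`. -/
def IsNbhdGen (N : Finset (Fin n))
    (L : Matrix (∀ a, d a) (∀ a, d a) ℂ →ₗ[ℂ] Matrix (∀ a, d a) (∀ a, d a) ℂ) : Prop :=
  ∃ HN : Matrix (nbhdIdx d N) (nbhdIdx d N) ℂ, HN.IsHermitian ∧
    ∃ (m : ℕ) (Lk : Fin m → Matrix (nbhdIdx d N) (nbhdIdx d N) ℂ),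
      L = lindbladMap (nbhdLift d N HN) fun k => nbhdLift d N (Lk k)

/-- A purely dissipative neighborhood generator for `N` (zero Hamiltonian in some
Lindblad representation). -/
def IsDissipNbhdGen (N : Finset (Fin n))
    (L : Matrix (∀ a, d a) (∀ a, d a) ℂ →ₗ[ℂ] Matrix (∀ a, d a) (∀ a, d a) ℂ) : Prop :=
  ∃ (m : ℕ) (Lk : Fin m → Matrix (nbhdIdx d N) (nbhdIdx d N) ℂ),
    L = lindbladMap 0 fun k => nbhdLift d N (Lk k)

/-- The family of neighborhood generators `Lj` is frustration free: every invariant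
state of the sum is invariant for each component. -/
def IsFFFamily {M : ℕ}
    (Lj : Fin M → (Matrix (∀ a, d a) (∀ a, d a) ℂ →ₗ[ℂ] Matrix (∀ a, d a) (∀ a, d a) ℂ)) :
    Prop :=
  ∀ ρ : Matrix (∀ a, d a) (∀ a, d a) ℂ, IsDensity ρ → (∑ j, Lj j) ρ = 0 → ∀ j, Lj j ρ = 0

/-- `ρ` is frustration-free quasi-locally stabilizable relative to the neighborhood
structure `Nb`. -/
def IsFFQLS {M : ℕ} (Nb : Fin M → Finset (Fin n))
    (ρ : Matrix (∀ a, d a) (∀ a, d a) ℂ) : Prop :=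
  ∃ Lj : Fin M → (Matrix (∀ a, d a) (∀ a, d a) ℂ →ₗ[ℂ] Matrix (∀ a, d a) (∀ a, d a) ℂ),
    (∀ j, IsNbhdGen d (Nb j) (Lj j)) ∧ IsFFFamily d Lj ∧ IsGAS (∑ j, Lj j) ρ

/-- A pure state `|ψ⟩⟨ψ|` is dissipatively quasi-locally stabilizable relative to `Nb`:
it is GAS for a QL generator whose components have zero Hamiltonian and neighborhood
noise operators annihilating `ψ`. -/
def IsDQLS {M : ℕ} (Nb : Fin M → Finset (Fin n)) (ψ : (∀ a, d a) → ℂ) : Prop :=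
  ∃ Lj : Fin M → (Matrix (∀ a, d a) (∀ a, d a) ℂ →ₗ[ℂ] Matrix (∀ a, d a) (∀ a, d a) ℂ),
    (∀ j, ∃ (m : ℕ) (Dk : Fin m → Matrix (nbhdIdx d (Nb j)) (nbhdIdx d (Nb j)) ℂ),
      Lj j = lindbladMap 0 (fun k => nbhdLift d (Nb j) (Dk k)) ∧
      ∀ k, (nbhdLift d (Nb j) (Dk k)).mulVec ψ = 0) ∧
    IsGAS (∑ j, Lj j) (Matrix.vecMulVec ψ (star ψ))

/-- The (vector) Schmidt span of `ψ` relative to the neighborhood factor `H_N`. -/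
def vecSchmidt (N : Finset (Fin n)) (ψ : (∀ a, d a) → ℂ) : Set (nbhdIdx d N → ℂ) :=
  {w | ∃ b : nbhdCoIdx d N → ℂ,
    w = fun i => ∑ k, (starRingEnd ℂ) (b k) * ψ ((splitEquiv d N).symm (i, k))}

/-- `Σ_N(ψ) ⊗ H_N̄` as a subspace of `H`. -/
noncomputable def extVecSchmidt (N : Finset (Fin n)) (ψ : (∀ a, d a) → ℂ) :
    Submodule ℂ ((∀ a, d a) → ℂ) :=
  Submodule.span ℂ {v | ∃ w ∈ vecSchmidt d N ψ, ∃ b : nbhdCoIdx d N → ℂ,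
    v = fun x => w ((splitEquiv d N) x).1 * b ((splitEquiv d N) x).2}

end Multipartite

/-! ### Statement 3 -/

/-!
Each product `w ⊗ b` with `w = (I ⊗ c†) v` in the Schmidt span of `v` is `(I ⊗ b c†) v`, and the
operators `I ⊗ B` commute with `M_A ⊗ I`, hence preserve its eigenspaces.
-/

section LocalOperators

open scoped Kronecker

theorem commute_kronecker_one_one_kronecker {R m n : Type*} [CommSemiring R] [Fintype m]
    [Fintype n] [DecidableEq m] [DecidableEq n] (A : Matrix m m R) (B : Matrix n n R) :
    Commute (A ⊗ₖ (1 : Matrix n n R)) ((1 : Matrix m m R) ⊗ₖ B) := by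
  simp only [Commute, SemiconjBy, ← mul_kronecker_mul, mul_one, one_mul]

theorem one_kronecker_vecMulVec_mulVec {R m n p : Type*} [CommSemiring R] [Fintype m]
    [Fintype n] [DecidableEq m] (b : p → R) (c : n → R) (v : m × n → R) :
    ((1 : Matrix m m R) ⊗ₖ vecMulVec b c) *ᵥ v = fun q => (∑ j, c j * v (q.1, j)) * b q.2 := by
  ext ⟨i, k⟩
  calc (((1 : Matrix m m R) ⊗ₖ vecMulVec b c) *ᵥ v) (i, k)
      = ∑ j, b k * c j * v (i, j) := by
        simp [mulVec, dotProduct, Fintype.sum_prod_type, one_apply, vecMulVec_apply]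
    _ = (∑ j, c j * v (i, j)) * b k := by
        simp only [Finset.sum_mul, mul_assoc, mul_comm (b k)]

theorem mulVec_one_kronecker_mulVec_eq_smul {R m n : Type*} [CommSemiring R] [Fintype m]
    [Fintype n] [DecidableEq m] [DecidableEq n] {A : Matrix m m R} {v : m × n → R} {μ : R}
    (hv : (A ⊗ₖ (1 : Matrix n n R)) *ᵥ v = μ • v) (B : Matrix n n R) :
    (A ⊗ₖ (1 : Matrix n n R)) *ᵥ (((1 : Matrix m m R) ⊗ₖ B) *ᵥ v) =
      μ • (((1 : Matrix m m R) ⊗ₖ B) *ᵥ v) := by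
  rw [mulVec_mulVec, (commute_kronecker_one_one_kronecker A B).eq, ← mulVec_mulVec, hv,
    mulVec_smul]

variable {α β : Type*} [Fintype α] [Fintype β]

theorem extVSchmidtA_le [DecidableEq α] {v : α × β → ℂ} {S : Submodule ℂ (α × β → ℂ)}
    (hS : ∀ B : Matrix β β ℂ, ((1 : Matrix α α ℂ) ⊗ₖ B) *ᵥ v ∈ S) : extVSchmidtA v ≤ S := by
  refine Submodule.span_le.2 ?_
  rintro _ ⟨_, ⟨c, rfl⟩, b, rfl⟩
  exact one_kronecker_vecMulVec_mulVec b (star c) v ▸ hS (vecMulVec b (star c))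

theorem extVSchmidtA_le_eigenspace [DecidableEq β] {v : α × β → ℂ} {A : Matrix α α ℂ} {μ : ℂ}
    (hv : (A ⊗ₖ (1 : Matrix β β ℂ)) *ᵥ v = μ • v) :
    extVSchmidtA v ≤ Module.End.eigenspace (A ⊗ₖ (1 : Matrix β β ℂ)).mulVecLin μ := by
  classical
  exact extVSchmidtA_le fun B =>
    Module.End.mem_eigenspace_iff.2 (mulVec_one_kronecker_mulVec_eq_smul hv B)

end LocalOperators

theorem stmt3
    {α β : Type*} [Fintype α] [Fintype β] [DecidableEq α] [DecidableEq β]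
    (v : α × β → ℂ) (MA : Matrix α α ℂ) (lam : ℂ)
    (h : (Matrix.kroneckerMap (· * ·) MA (1 : Matrix β β ℂ)).mulVec v = lam • v) :
    (∀ v' ∈ extVSchmidtA v,
        (Matrix.kroneckerMap (· * ·) MA (1 : Matrix β β ℂ)).mulVec v' = lam • v') ∧
      ((Matrix.kroneckerMap (· * ·) MA (1 : Matrix β β ℂ)).mulVec v = 0 →
        ∀ v' ∈ extVSchmidtA v,
          (Matrix.kroneckerMap (· * ·) MA (1 : Matrix β β ℂ)).mulVec v' = 0) ∧
      ((Matrix.kroneckerMap (· * ·) MA (1 : Matrix β β ℂ)).mulVec v = v →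
        ∀ v' ∈ extVSchmidtA v,
          (Matrix.kroneckerMap (· * ·) MA (1 : Matrix β β ℂ)).mulVec v' = v') := by
  have eigen {μ : ℂ} (hμ : (kroneckerMap (· * ·) MA (1 : Matrix β β ℂ)).mulVec v = μ • v) :
      ∀ v' ∈ extVSchmidtA v,
        (kroneckerMap (· * ·) MA (1 : Matrix β β ℂ)).mulVec v' = μ • v' :=
    fun _ hv' => Module.End.mem_eigenspace_iff.1 (extVSchmidtA_le_eigenspace hμ hv')
  refine ⟨eigen h, fun h_ker => ?_, fun h_fix => ?_⟩
  · simpa only [zero_smul] using eigen (h_ker.trans (zero_smul ℂ v).symm)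
  · simpa only [one_smul] using eigen (h_fix.trans (one_smul ℂ v).symm)

end QDS
end

section
/- Let ρ be a density operator on a finite-dimensional tensor product H_A ⊗ H_B. Then supp(Tr_B ρ) = supp(Σ_A(ρ)), where Σ_A(ρ) = {Tr_B[(I_A ⊗ B)ρ] : B ∈ B(H_B)} is the operator Schmidt span of ρ on A: the support of the reduced state equals the span of the union of the supports of the elements of the operator Schmidt span. -/
namespace QDS

open Matrix
open scoped ComplexOrder

/-! ### Statement 4 -/

/-!
The support of an operator is the orthogonal complement of its kernel, so a larger kernel means
a smaller support. If `v` lies in the kernel of `Tr_B ρ = ∑ₖ (I ⊗ ⟨eₖ|) ρ (I ⊗ |eₖ⟩)`, then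
`∑ₖ ⟪v ⊗ eₖ, ρ (v ⊗ eₖ)⟫ = 0` is a vanishing sum of nonnegative terms, and positivity of `ρ` gives
`ρ (v ⊗ eₖ) = 0` for every `k`. Hence `v` is also in the kernel of `Tr_B (Y ρ)` for every `Y`, in
particular for `Y = I ⊗ B`. Conversely, `Tr_B ρ` itself belongs to the operator Schmidt span.
-/

theorem mulVec_mulVec_eq_zero_of_sum_conjTranspose_mul_mul
    {κ m n 𝕜 : Type*} [Fintype κ] [Fintype m] [Fintype n] [RCLike 𝕜]
    {P : Matrix m m 𝕜} (hP : P.PosSemidef) {V : κ → Matrix m n 𝕜} {v : n → 𝕜}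
    (hv : (∑ k, (V k)ᴴ * P * V k) *ᵥ v = 0) (k : κ) : P *ᵥ V k *ᵥ v = 0 := by
  have quadratic_form_eq (k : κ) :
      star v ⬝ᵥ ((V k)ᴴ * P * V k) *ᵥ v = star (V k *ᵥ v) ⬝ᵥ P *ᵥ V k *ᵥ v := by
    rw [star_mulVec, ← dotProduct_mulVec, mulVec_mulVec, mulVec_mulVec, Matrix.mul_assoc]
  have sum_eq_zero : ∑ k, star (V k *ᵥ v) ⬝ᵥ P *ᵥ V k *ᵥ v = 0 := by
    simp only [← quadratic_form_eq, ← dotProduct_sum, ← sum_mulVec, hv, dotProduct_zero]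
  have term_eq_zero : star (V k *ᵥ v) ⬝ᵥ P *ᵥ V k *ᵥ v = 0 :=
    (Finset.sum_eq_zero_iff_of_nonneg fun k _ => hP.dotProduct_mulVec_nonneg (V k *ᵥ v)).mp
      sum_eq_zero k (Finset.mem_univ k)
  exact (hP.dotProduct_mulVec_zero_iff _).mp term_eq_zero

section Support

variable {ι : Type*} [Fintype ι]

theorem msupp_eq_map_orthogonal_ker [DecidableEq ι] (A : Matrix ι ι ℂ) :
    msupp A =
      (LinearMap.ker (toEuclideanLin A))ᗮ.map (WithLp.linearEquiv 2 ℂ (ι → ℂ)).toLinearMap := by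
  rw [LinearMap.orthogonal_ker, ← toEuclideanLin_conjTranspose_eq_adjoint]
  ext w
  simp [msupp, toLpLin_apply, (WithLp.linearEquiv 2 ℂ (ι → ℂ)).surjective.exists]

theorem msupp_le_msupp_of_mulVec_eq_zero {A B : Matrix ι ι ℂ}
    (h : ∀ v, A *ᵥ v = 0 → B *ᵥ v = 0) : msupp B ≤ msupp A := by
  classical
  have ker_le : LinearMap.ker (toEuclideanLin A) ≤ LinearMap.ker (toEuclideanLin B) := by
    intro v hv
    simp only [LinearMap.mem_ker, toLpLin_apply, WithLp.toLp_eq_zero] at hv ⊢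
    exact h _ hv
  rw [msupp_eq_map_orthogonal_ker, msupp_eq_map_orthogonal_ker]
  exact Submodule.map_mono (Submodule.orthogonal_le ker_le)

end Support

section PartialTrace

/-- The isometry `I ⊗ |eₖ⟩ : v ↦ v ⊗ eₖ` from `H_A` to `H_A ⊗ H_B`, used to write the partial trace
in operator-sum form. -/
def tensorSingle (α : Type*) {β : Type*} [DecidableEq α] [DecidableEq β] (k : β) :
    Matrix (α × β) α ℂ :=
  (1 : Matrix (α × β) (α × β) ℂ).submatrix id (·, k)

variable {α β : Type*} [Fintype α] [Fintype β]

theorem ptraceB_eq_sum_tensorSingle [DecidableEq α] [DecidableEq β]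
    (X : Matrix (α × β) (α × β) ℂ) :
    ptraceB X = ∑ k : β, (tensorSingle α k)ᴴ * X * tensorSingle α k := by
  ext i j
  simp [ptraceB, tensorSingle, Matrix.sum_apply, mul_apply, one_apply]

theorem ptraceB_mul_mulVec_eq_zero {ρ : Matrix (α × β) (α × β) ℂ} (hρ : ρ.PosSemidef)
    (Y : Matrix (α × β) (α × β) ℂ) {v : α → ℂ} (hv : ptraceB ρ *ᵥ v = 0) :
    ptraceB (Y * ρ) *ᵥ v = 0 := by
  classical
  rw [ptraceB_eq_sum_tensorSingle] at hv
  have hρv (k : β) : ρ *ᵥ tensorSingle α k *ᵥ v = 0 :=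
    mulVec_mulVec_eq_zero_of_sum_conjTranspose_mul_mul hρ hv k
  simp only [ptraceB_eq_sum_tensorSingle, sum_mulVec, ← mulVec_mulVec, hρv, mulVec_zero,
    Finset.sum_const_zero]

theorem msupp_ptraceB_mul_le {ρ : Matrix (α × β) (α × β) ℂ} (hρ : ρ.PosSemidef)
    (Y : Matrix (α × β) (α × β) ℂ) : msupp (ptraceB (Y * ρ)) ≤ msupp (ptraceB ρ) :=
  msupp_le_msupp_of_mulVec_eq_zero fun _ => ptraceB_mul_mulVec_eq_zero hρ Y

theorem ptraceB_mem_opSchmidtA [DecidableEq α] (X : Matrix (α × β) (α × β) ℂ) :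
    ptraceB X ∈ opSchmidtA X := by
  classical
  exact ⟨1, congrArg ptraceB (by rw [one_kronecker_one, one_mul])⟩

end PartialTrace

theorem stmt4
    {α β : Type*} [Fintype α] [Fintype β] [DecidableEq α] [DecidableEq β]
    (ρ : Matrix (α × β) (α × β) ℂ) (hρ : IsDensity ρ) :
    msupp (ptraceB ρ) = suppSet (opSchmidtA ρ) := by
  apply le_antisymm
  · exact le_iSup₂_of_le (ptraceB ρ) (ptraceB_mem_opSchmidtA ρ) le_rfl
  · refine iSup₂_le ?_
    rintro _ ⟨B, rfl⟩
    exact msupp_ptraceB_mul_le hρ.1 _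

end QDS
end

section
/- Let W ⊆ B(H) be a linear subspace containing a positive-semidefinite operator ρ ≠ 0 (normalized to a density operator) with supp(ρ) = supp(W). If T : B(H) → B(H) is a CPTP map with W ⊆ fix(T), then F_ρ(W) ⊆ fix(T). -/
namespace QDS

open Matrix
open scoped ComplexOrder

/-!
For a fixed point `ρ ≥ 0` of `T` and any `D`, the sum `∑ₖ [Mₖ, D] ρ [Mₖ, D]ᴴ` over the Kraus
operators is positive semidefinite, and its trace vanishes as soon as `T (D ρ) Dᴴ` and `D ρ Dᴴ`
have the same trace. Hence `T (D ρ) = D ρ` exactly when every `Mₖ` commutes with `D` on the range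
of `ρ`, and then `T (C ρ Dᴴ) = C ρ Dᴴ` for any two such `C` and `D`.

By the Jordan decomposition the fixed points of `T` are spanned by positive ones, and applying the
commutation criterion to a positive fixed point and the support projection of `ρ` shows that this
projection maps fixed points to fixed points. So if `X` is fixed, then `X ρ⁻` commutes with the `Mₖ`
on the range of `ρ`. This gives closure under `(X, Y) ↦ X ρ⁻ Y`, and, by another trace computation,
under `X ↦ ρ X ρ⁻`. The latter map is the square of the modular map, which is diagonalizable with
nonnegative eigenvalues and hence a polynomial in its square.
-/

/-! ### Moore–Penrose inverses -/

/-- `b` is a Moore–Penrose inverse of `a`: the four Penrose conditions, stated in any type with a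
multiplication and an involution so that they can be transported along ⋆-homomorphisms. -/
structure IsMoorePenrose {R : Type*} [Mul R] [Star R] (a b : R) : Prop where
  mul_mul_left : a * b * a = a
  mul_mul_right : b * a * b = b
  isSelfAdjoint_left : IsSelfAdjoint (a * b)
  isSelfAdjoint_right : IsSelfAdjoint (b * a)

namespace IsMoorePenrose

section StarMul

variable {R S : Type*} [Semigroup R] [StarMul R] [Semigroup S] [StarMul S] {a b c : R}

protected theorem map (h : IsMoorePenrose a b) {F : Type*} [FunLike F R S] [MulHomClass F R S]
    [StarHomClass F R S] (f : F) : IsMoorePenrose (f a) (f b) where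
  mul_mul_left := by simp only [← map_mul, h.mul_mul_left]
  mul_mul_right := by simp only [← map_mul, h.mul_mul_right]
  isSelfAdjoint_left := by simpa only [← map_mul] using h.isSelfAdjoint_left.map f
  isSelfAdjoint_right := by simpa only [← map_mul] using h.isSelfAdjoint_right.map f

protected theorem star (h : IsMoorePenrose a b) : IsMoorePenrose (star a) (star b) where
  mul_mul_left := by simp only [← star_mul, ← mul_assoc, h.mul_mul_left]
  mul_mul_right := by simp only [← star_mul, ← mul_assoc, h.mul_mul_right]
  isSelfAdjoint_left := by
    rw [← star_mul]; exact IsSelfAdjoint.star_iff.2 h.isSelfAdjoint_right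
  isSelfAdjoint_right := by
    rw [← star_mul]; exact IsSelfAdjoint.star_iff.2 h.isSelfAdjoint_left

theorem mul_eq_mul (hb : IsMoorePenrose a b) (hc : IsMoorePenrose a c) : a * b = a * c :=
  calc a * b = a * c * (a * b) := by rw [← mul_assoc, hc.mul_mul_left]
    _ = star (a * b * (a * c)) := by
      rw [star_mul, hb.isSelfAdjoint_left.star_eq, hc.isSelfAdjoint_left.star_eq]
    _ = a * c := by rw [← mul_assoc, hb.mul_mul_left, hc.isSelfAdjoint_left.star_eq]

protected theorem unique (hb : IsMoorePenrose a b) (hc : IsMoorePenrose a c) : b = c := by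
  have hba : b * a = c * a := by
    simpa only [← star_mul, star_inj] using hb.star.mul_eq_mul hc.star
  calc b = b * a * b := hb.mul_mul_right.symm
    _ = c * (a * b) := by rw [hba, mul_assoc]
    _ = c := by rw [hb.mul_eq_mul hc, ← mul_assoc, hc.mul_mul_right]

protected theorem isSelfAdjoint (h : IsMoorePenrose a b) (ha : IsSelfAdjoint a) :
    IsSelfAdjoint b := by
  have hstar := h.star
  rw [ha.star_eq] at hstar
  exact hstar.unique h

protected theorem commute (h : IsMoorePenrose a b) (ha : IsSelfAdjoint a) : Commute a b := by
  rw [Commute, SemiconjBy, ← h.isSelfAdjoint_left.star_eq, star_mul, ha.star_eq,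
    (h.isSelfAdjoint ha).star_eq]

theorem isStarProjection (h : IsMoorePenrose a b) : IsStarProjection (a * b) where
  isIdempotentElem := by rw [IsIdempotentElem, ← mul_assoc, h.mul_mul_left]
  isSelfAdjoint := h.isSelfAdjoint_left

protected theorem mul_self (h : IsMoorePenrose a b) (hab : Commute a b) :
    IsMoorePenrose (a * a) (b * b) := by
  have hleft : a * a * (b * b) = a * b := by
    rw [hab.mul_mul_mul_comm, hab.eq, ← mul_assoc, h.mul_mul_right]
  have hright : b * b * (a * a) = a * b := by
    rw [← hleft, ((hab.mul_left hab).mul_right (hab.mul_left hab)).eq]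
  exact
    { mul_mul_left := by rw [hleft, ← mul_assoc, h.mul_mul_left]
      mul_mul_right := by rw [hright, hab.eq, ← mul_assoc, h.mul_mul_right]
      isSelfAdjoint_left := hleft ▸ h.isSelfAdjoint_left
      isSelfAdjoint_right := hright ▸ h.isSelfAdjoint_left }

end StarMul

protected theorem diagonal {K ι : Type*} [Field K] [StarRing K] [Fintype ι] [DecidableEq ι]
    (d : ι → K) : IsMoorePenrose (diagonal d) (diagonal fun i => (d i)⁻¹) := by
  have hself : IsSelfAdjoint (diagonal fun i => d i * (d i)⁻¹) := by
    rw [IsSelfAdjoint, star_eq_conjTranspose, diagonal_conjTranspose]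
    refine congrArg diagonal (funext fun i => ?_)
    by_cases h : d i = 0 <;> simp [h]
  have hinv (i : ι) : (d i)⁻¹ * d i * (d i)⁻¹ = (d i)⁻¹ := by
    by_cases h : d i = 0 <;> simp [h]
  constructor
  · simp only [diagonal_mul_diagonal, mul_inv_mul_cancel]
  · simp only [diagonal_mul_diagonal, hinv]
  · simpa only [diagonal_mul_diagonal] using hself
  · simpa only [diagonal_mul_diagonal, mul_comm] using hself

end IsMoorePenrose

section Pseudoinverse

theorem exists_isMoorePenrose {𝕜 ι : Type*} [RCLike 𝕜] [Fintype ι] {A : Matrix ι ι 𝕜}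
    (hA : A.IsHermitian) : ∃ B, IsMoorePenrose A B := by
  classical
  rw [hA.spectral_theorem]
  exact ⟨_, (IsMoorePenrose.diagonal _).map _⟩

variable {ι : Type*} [Fintype ι] {A : Matrix ι ι ℂ}

theorem isMoorePenrose_mpinv (hA : A.IsHermitian) : IsMoorePenrose A (mpinv A) := by
  obtain ⟨B, hB⟩ := exists_isMoorePenrose hA
  rw [mpinv, dif_pos ⟨B, hB.mul_mul_left, hB.mul_mul_right, hB.isSelfAdjoint_left,
    hB.isSelfAdjoint_right⟩]
  generalize_proofs hex
  obtain ⟨h₁, h₂, h₃, h₄⟩ := hex.choose_spec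
  exact ⟨h₁, h₂, h₃, h₄⟩

theorem mpinv_mul_self (hA : A.IsHermitian) : mpinv (A * A) = mpinv A * mpinv A :=
  have hA' := isMoorePenrose_mpinv hA
  have hAA : (A * A).IsHermitian := by rw [IsHermitian, conjTranspose_mul, hA.eq]
  (isMoorePenrose_mpinv hAA).unique (hA'.mul_self (hA'.commute hA))

end Pseudoinverse

/-! ### Square roots -/

section SquareRoot

variable {ι : Type*} [Fintype ι] {A : Matrix ι ι ℂ}

open scoped MatrixOrder in
theorem msqrt_spec (hA : A.PosSemidef) : (msqrt A).PosSemidef ∧ msqrt A * msqrt A = A := by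
  classical
  have hex : ∃ B : Matrix ι ι ℂ, B.PosSemidef ∧ B * B = A :=
    ⟨CFC.sqrt A, nonneg_iff_posSemidef.1 (CFC.sqrt_nonneg A),
      CFC.sqrt_mul_sqrt_self A (nonneg_iff_posSemidef.2 hA)⟩
  rw [msqrt, dif_pos hex]
  exact hex.choose_spec

theorem posSemidef_msqrt (hA : A.PosSemidef) : (msqrt A).PosSemidef :=
  (msqrt_spec hA).1

theorem msqrt_mul_msqrt (hA : A.PosSemidef) : msqrt A * msqrt A = A :=
  (msqrt_spec hA).2

end SquareRoot

section InvariantSubspace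

/-- By interpolation `f` is a polynomial in `f * f`. -/
theorem mem_invtSubmodule_of_mul_self {κ K V : Type*} [Finite κ] [Field K] [AddCommGroup V]
    [Module K V] (b : Module.Basis κ K V) {f : Module.End K V} {r : κ → K}
    (hf : ∀ i, f (b i) = r i • b i) (hr : ∀ i j, r i * r i = r j * r j → r i = r j)
    {p : Submodule K V} (hp : p ∈ (f * f).invtSubmodule) : p ∈ f.invtSubmodule := by
  obtain ⟨q, hq⟩ := (Polynomial.exists_eval_eq_iff (fun i => r i * r i) r).2 hr
  have hff (i : κ) : (f * f) (b i) = (r i * r i) • b i := by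
    rw [Module.End.mul_apply, hf, map_smul, hf, smul_smul]
  have hfq : Polynomial.aeval (f * f) q = f := b.ext fun i => by
    rw [Module.End.aeval_apply_of_mem_apply_eq_smul (hff i), hq, hf]
  intro v hv
  simpa only [hfq, Submodule.mem_comap] using
    Polynomial.aeval_apply_smul_mem_of_le_comap hv q (f * f) hp

variable {𝕜 ι : Type*} [RCLike 𝕜] [Fintype ι] {B R : Matrix ι ι 𝕜}

theorem exists_basis_mul_mul_eq_smul (hB : B.PosSemidef) (hR : IsMoorePenrose B R) :
    ∃ (b : Module.Basis (ι × ι) 𝕜 (Matrix ι ι 𝕜)) (r : ι × ι → ℝ),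
      (∀ p, 0 ≤ r p) ∧ ∀ p, B * b p * R = (r p : 𝕜) • b p := by
  classical
  let d := hB.isHermitian.eigenvalues
  let φ := Unitary.conjStarAlgAut 𝕜 (Matrix ι ι 𝕜) hB.isHermitian.eigenvectorUnitary
  have hBφ : B = φ (diagonal fun i => (d i : 𝕜)) := hB.isHermitian.spectral_theorem
  have hRφ : R = φ (diagonal fun i => (d i : 𝕜)⁻¹) :=
    hR.unique (hBφ ▸ (IsMoorePenrose.diagonal _).map φ)
  refine ⟨(stdBasis 𝕜 ι ι).map φ.toAlgEquiv.toLinearEquiv, fun p => d p.1 * (d p.2)⁻¹,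
    fun p => mul_nonneg (hB.eigenvalues_nonneg _) (inv_nonneg.2 (hB.eigenvalues_nonneg _)), ?_⟩
  rintro ⟨i, j⟩
  change B * φ (stdBasis 𝕜 ι ι (i, j)) * R = _ • φ (stdBasis 𝕜 ι ι (i, j))
  rw [hBφ, hRφ, ← map_mul, ← map_mul, ← map_smul, stdBasis_eq_single]
  congr 1
  ext k l
  simp only [mul_diagonal, diagonal_mul, Matrix.smul_apply, single_apply]
  by_cases hkl : i = k ∧ j = l <;> simp [hkl]

theorem mul_mul_mem_of_mul_self (hB : B.PosSemidef) (hR : IsMoorePenrose B R)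
    {V : Submodule 𝕜 (Matrix ι ι 𝕜)} (hV : ∀ X ∈ V, B * B * X * (R * R) ∈ V)
    {X : Matrix ι ι 𝕜} (hX : X ∈ V) : B * X * R ∈ V := by
  obtain ⟨b, r, hr, hb⟩ := exists_basis_mul_mul_eq_smul hB hR
  have hr_inj (p q : ι × ι) (h : (r p : 𝕜) * r p = r q * r q) : (r p : 𝕜) = r q := by
    norm_cast at h ⊢
    exact (mul_self_inj (hr p) (hr q)).1 h
  refine mem_invtSubmodule_of_mul_self b (f := LinearMap.mulLeftRight 𝕜 (B, R)) hb hr_inj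
    (fun Y hY => ?_) hX
  simpa only [Submodule.mem_comap, Module.End.mul_apply, LinearMap.mulLeftRight_apply,
    mul_assoc] using hV Y hY

end InvariantSubspace

/-! ### Fixed points of a Kraus map -/

section Trace

variable {𝕜 ι : Type*} [RCLike 𝕜] [Fintype ι]

open scoped MatrixOrder in
theorem mul_eq_zero_of_trace_eq_zero {ρ Y : Matrix ι ι 𝕜} (hρ : ρ.PosSemidef)
    (h : (Y * ρ * Yᴴ).trace = 0) : Y * ρ = 0 := by
  classical
  obtain ⟨C, rfl⟩ := CStarAlgebra.nonneg_iff_eq_star_mul_self.mp hρ.nonneg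
  rw [star_eq_conjTranspose] at h ⊢
  have hYC : Y * Cᴴ = 0 := by
    rw [← trace_mul_conjTranspose_self_eq_zero_iff, conjTranspose_mul, conjTranspose_conjTranspose]
    simpa only [mul_assoc] using h
  rw [← mul_assoc, hYC, zero_mul]

theorem mul_eq_zero_of_sum_trace_eq_zero {κ : Type*} [Fintype κ] {ρ : Matrix ι ι 𝕜}
    (hρ : ρ.PosSemidef) {Y : κ → Matrix ι ι 𝕜} (h : (∑ k, Y k * ρ * (Y k)ᴴ).trace = 0) (k : κ) :
    Y k * ρ = 0 := by
  rw [trace_sum, Finset.sum_eq_zero_iff_of_nonneg fun k _ =>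
    (hρ.mul_mul_conjTranspose_same (Y k)).trace_nonneg] at h
  exact mul_eq_zero_of_trace_eq_zero hρ (h k (Finset.mem_univ k))

variable {P : Matrix ι ι 𝕜}

theorem trace_mul_mul_conjTranspose_of_isStarProjection (hP : IsStarProjection P)
    (X : Matrix ι ι 𝕜) : (P * X * Pᴴ).trace = (P * X).trace := by
  rw [← star_eq_conjTranspose, hP.isSelfAdjoint.star_eq, trace_mul_comm, ← mul_assoc,
    hP.isIdempotentElem.eq]

theorem trace_mul_nonneg_of_isStarProjection (hP : IsStarProjection P) {A : Matrix ι ι 𝕜}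
    (hA : A.PosSemidef) : 0 ≤ (P * A).trace := by
  rw [← trace_mul_mul_conjTranspose_of_isStarProjection hP]
  exact (hA.mul_mul_conjTranspose_same P).trace_nonneg

theorem mul_eq_zero_of_isStarProjection (hP : IsStarProjection P) {A : Matrix ι ι 𝕜}
    (hA : A.PosSemidef) (h : (P * A).trace = 0) : P * A = 0 :=
  mul_eq_zero_of_trace_eq_zero hA (by rwa [trace_mul_mul_conjTranspose_of_isStarProjection hP])

end Trace

/-- The matrices `M k` are Kraus operators of the trace-preserving map `T`; unlike in `IsCPTP`,
the family is data and may be indexed by any finite type. -/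
structure IsKrausRep {𝕜 ι κ : Type*} [RCLike 𝕜] [Fintype ι] [DecidableEq ι] [Fintype κ]
    (T : Matrix ι ι 𝕜 →ₗ[𝕜] Matrix ι ι 𝕜) (M : κ → Matrix ι ι 𝕜) : Prop where
  apply_eq_sum (X : Matrix ι ι 𝕜) : T X = ∑ k, M k * X * (M k)ᴴ
  sum_conjTranspose_mul : ∑ k, (M k)ᴴ * M k = 1

namespace IsKrausRep

section RCLike

variable {𝕜 ι κ : Type*} [RCLike 𝕜] [Fintype ι] [DecidableEq ι] [Fintype κ]
  {T : Matrix ι ι 𝕜 →ₗ[𝕜] Matrix ι ι 𝕜} {M : κ → Matrix ι ι 𝕜}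

theorem map_conjTranspose (h : IsKrausRep T M) (X : Matrix ι ι 𝕜) : T Xᴴ = (T X)ᴴ := by
  simp only [h.apply_eq_sum, conjTranspose_sum, conjTranspose_mul, conjTranspose_conjTranspose,
    mul_assoc]

theorem trace_map (h : IsKrausRep T M) (X : Matrix ι ι 𝕜) : (T X).trace = X.trace := by
  simp only [h.apply_eq_sum, trace_sum, trace_mul_cycle (M _) X]
  rw [← trace_sum, ← Finset.sum_mul, h.sum_conjTranspose_mul, one_mul]

theorem posSemidef_map (h : IsKrausRep T M) {X : Matrix ι ι 𝕜} (hX : X.PosSemidef) :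
    (T X).PosSemidef := by
  rw [h.apply_eq_sum]
  exact posSemidef_sum _ fun k _ => hX.mul_mul_conjTranspose_same (M k)

theorem map_conjTranspose_eq_self (h : IsKrausRep T M) {X : Matrix ι ι 𝕜} (hX : T X = X) :
    T Xᴴ = Xᴴ := by
  rw [h.map_conjTranspose, hX]

theorem sum_commutator_mul_conjTranspose (h : IsKrausRep T M) (ρ D : Matrix ι ι 𝕜) :
    ∑ k, (M k * D - D * M k) * ρ * (M k * D - D * M k)ᴴ =
      T (D * ρ * Dᴴ) - T (D * ρ) * Dᴴ - D * T (ρ * Dᴴ) + D * T ρ * Dᴴ := by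
  simp only [h.apply_eq_sum, Finset.mul_sum, Finset.sum_mul]
  rw [← Finset.sum_sub_distrib, ← Finset.sum_sub_distrib, ← Finset.sum_add_distrib]
  refine Finset.sum_congr rfl fun k _ => ?_
  simp only [conjTranspose_mul, conjTranspose_sub]
  noncomm_ring

variable {ρ : Matrix ι ι 𝕜}

theorem mul_mul_eq_of_trace_eq (h : IsKrausRep T M) (hρ : ρ.PosSemidef) (hTρ : T ρ = ρ)
    {D : Matrix ι ι 𝕜} (hD : (T (D * ρ) * Dᴴ).trace = (D * ρ * Dᴴ).trace) (k : κ) :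
    M k * D * ρ = D * M k * ρ := by
  have hD' : (D * T (ρ * Dᴴ)).trace = (D * ρ * Dᴴ).trace := by
    have hadj : D * T (ρ * Dᴴ) = (T (D * ρ) * Dᴴ)ᴴ := by
      rw [conjTranspose_mul, ← h.map_conjTranspose, conjTranspose_mul, conjTranspose_conjTranspose,
        hρ.isHermitian.eq]
    rw [hadj, trace_conjTranspose, hD, ← trace_conjTranspose,
      (hρ.mul_mul_conjTranspose_same D).isHermitian.eq]
  have hzero := mul_eq_zero_of_sum_trace_eq_zero hρ (Y := fun k => M k * D - D * M k) (by
    rw [h.sum_commutator_mul_conjTranspose, hTρ, trace_add, trace_sub, trace_sub, h.trace_map, hD,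
      hD', sub_self, zero_sub, neg_add_cancel]) k
  rwa [sub_mul, sub_eq_zero] at hzero

theorem map_mul_mul_conjTranspose (h : IsKrausRep T M) (hρ : ρ.IsHermitian) (hTρ : T ρ = ρ)
    {C D : Matrix ι ι 𝕜} (hC : ∀ k, M k * C * ρ = C * M k * ρ)
    (hD : ∀ k, M k * D * ρ = D * M k * ρ) : T (C * ρ * Dᴴ) = C * ρ * Dᴴ := by
  have hD' (k : κ) : ρ * Dᴴ * (M k)ᴴ = ρ * (M k)ᴴ * Dᴴ := by
    simpa only [conjTranspose_mul, hρ.eq, mul_assoc] using congrArg conjTranspose (hD k)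
  calc T (C * ρ * Dᴴ) = ∑ k, M k * C * ρ * Dᴴ * (M k)ᴴ := by
        simp only [h.apply_eq_sum, mul_assoc]
    _ = ∑ k, C * M k * (ρ * Dᴴ * (M k)ᴴ) := by simp only [hC, mul_assoc]
    _ = C * T ρ * Dᴴ := by
        simp only [hD', h.apply_eq_sum, Finset.mul_sum, Finset.sum_mul, mul_assoc]
    _ = C * ρ * Dᴴ := by rw [hTρ]

theorem map_mul_eq_self_iff (h : IsKrausRep T M) (hρ : ρ.PosSemidef) (hTρ : T ρ = ρ)
    {C : Matrix ι ι 𝕜} : T (C * ρ) = C * ρ ↔ ∀ k, M k * C * ρ = C * M k * ρ := by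
  refine ⟨fun hC => h.mul_mul_eq_of_trace_eq hρ hTρ (by rw [hC]), fun hC => ?_⟩
  simpa only [conjTranspose_one, mul_one] using
    h.map_mul_mul_conjTranspose hρ.isHermitian hTρ hC (D := 1) fun k => by rw [mul_one, one_mul]

section Support

variable {R : Matrix ι ι 𝕜}

theorem support_mul_mul_support (h : IsKrausRep T M) (hρ : ρ.PosSemidef) (hTρ : T ρ = ρ)
    (hR : IsMoorePenrose ρ R) (k : κ) : ρ * R * M k * (ρ * R) = M k * (ρ * R) := by
  have hk := (h.map_mul_eq_self_iff hρ hTρ (C := ρ * R)).1 (by rw [hR.mul_mul_left, hTρ]) k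
  rw [mul_assoc (M k), hR.mul_mul_left] at hk
  rw [← mul_assoc, ← hk, mul_assoc]

theorem support_mul_map_support_mul (h : IsKrausRep T M) (hρ : ρ.PosSemidef) (hTρ : T ρ = ρ)
    (hR : IsMoorePenrose ρ R) (X : Matrix ι ι 𝕜) :
    ρ * R * T (ρ * R * X) = T (ρ * R * X) := by
  simp only [h.apply_eq_sum, Finset.mul_sum]
  refine Finset.sum_congr rfl fun k _ => ?_
  calc ρ * R * (M k * (ρ * R * X) * (M k)ᴴ) = ρ * R * M k * (ρ * R) * X * (M k)ᴴ := by
        simp only [mul_assoc]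
    _ = M k * (ρ * R * X) * (M k)ᴴ := by
        rw [h.support_mul_mul_support hρ hTρ hR]; simp only [mul_assoc]

theorem map_support_mul_of_posSemidef (h : IsKrausRep T M) (hρ : ρ.PosSemidef) (hTρ : T ρ = ρ)
    (hR : IsMoorePenrose ρ R) {σ : Matrix ι ι 𝕜} (hσ : σ.PosSemidef) (hTσ : T σ = σ) :
    T (ρ * R * σ) = ρ * R * σ := by
  refine (h.map_mul_eq_self_iff hσ hTσ).2 (h.mul_mul_eq_of_trace_eq hσ hTσ ?_)
  have hP : (ρ * R)ᴴ = ρ * R := hR.isSelfAdjoint_left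
  rw [trace_mul_mul_conjTranspose_of_isStarProjection hR.isStarProjection, trace_mul_comm, hP,
    h.support_mul_map_support_mul hρ hTρ hR, h.trace_map]

theorem map_conjTranspose_mul (h : IsKrausRep T M) (hρ : ρ.PosSemidef) (hTρ : T ρ = ρ)
    (hR : IsMoorePenrose ρ R) {C : Matrix ι ι 𝕜} (hC : C * (ρ * R) = C) (hCρ : T (C * ρ) = C * ρ) :
    T (Cᴴ * ρ) = Cᴴ * ρ := by
  have hP : (ρ * R)ᴴ = ρ * R := hR.isSelfAdjoint_left
  have hsupp : ρ * (R * Cᴴ) = Cᴴ := by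
    simpa only [conjTranspose_mul C, hP, mul_assoc] using congrArg conjTranspose hC
  have hcomm (k : κ) : C * M k * Cᴴ = M k * C * Cᴴ := by
    rw [← hsupp, ← mul_assoc, ← mul_assoc (M k * C), (h.map_mul_eq_self_iff hρ hTρ).1 hCρ]
  refine (h.map_mul_eq_self_iff hρ hTρ).2 (h.mul_mul_eq_of_trace_eq hρ hTρ ?_)
  rw [conjTranspose_conjTranspose]
  calc (T (Cᴴ * ρ) * C).trace = (C * T (Cᴴ * ρ)).trace := trace_mul_comm _ _
    _ = (∑ k, C * M k * Cᴴ * (ρ * (M k)ᴴ)).trace := by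
        simp only [h.apply_eq_sum, Finset.mul_sum, mul_assoc]
    _ = (T (C * (Cᴴ * ρ))).trace := by simp only [hcomm, h.apply_eq_sum, mul_assoc]
    _ = (Cᴴ * ρ * C).trace := by rw [h.trace_map, trace_mul_comm]

end Support

/-- Trace preservation forces `T A` to stay inside, and `T B` outside, the support of `A`. -/
theorem map_eq_self_of_map_sub (h : IsKrausRep T M) {A B : Matrix ι ι 𝕜} (hA : A.PosSemidef)
    (hB : B.PosSemidef) (hAB : A * B = 0) (hT : T (A - B) = A - B) : T A = A := by
  obtain ⟨R, hR⟩ := exists_isMoorePenrose hA.isHermitian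
  set P := A * R with hPdef
  have hP : IsStarProjection P := hR.isStarProjection
  have hP_sub : P * (A - B) = A := by
    rw [mul_sub, hPdef, hR.mul_mul_left, (hR.commute hA.isHermitian).eq, mul_assoc, hAB, mul_zero,
      sub_zero]
  have hsum : ((1 - P) * T A).trace + (P * T B).trace = 0 :=
    calc ((1 - P) * T A).trace + (P * T B).trace = (T A).trace - (P * T (A - B)).trace := by
          rw [map_sub, mul_sub, sub_mul, one_mul, trace_sub, trace_sub]; ring
      _ = 0 := by rw [hT, hP_sub, h.trace_map, sub_self]
  have htrace := (add_eq_zero_iff_of_nonneg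
    (trace_mul_nonneg_of_isStarProjection hP.one_sub (h.posSemidef_map hA))
    (trace_mul_nonneg_of_isStarProjection hP (h.posSemidef_map hB))).1 hsum
  have hTA : (1 - P) * T A = 0 :=
    mul_eq_zero_of_isStarProjection hP.one_sub (h.posSemidef_map hA) htrace.1
  have hTB : P * T B = 0 := mul_eq_zero_of_isStarProjection hP (h.posSemidef_map hB) htrace.2
  calc T A = P * T A := by rwa [sub_mul, one_mul, sub_eq_zero] at hTA
    _ = P * T (A - B) := by rw [map_sub, mul_sub, hTB, sub_zero]
    _ = A := by rw [hT, hP_sub]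

open scoped MatrixOrder in
theorem mem_span_posSemidef_of_isHermitian (h : IsKrausRep T M) {X : Matrix ι ι 𝕜}
    (hX : X.IsHermitian) (hTX : T X = X) :
    X ∈ Submodule.span 𝕜 {σ : Matrix ι ι 𝕜 | σ.PosSemidef ∧ T σ = σ} := by
  have hpos : (X⁺).PosSemidef := nonneg_iff_posSemidef.1 (CFC.posPart_nonneg X)
  have hneg : (X⁻).PosSemidef := nonneg_iff_posSemidef.1 (CFC.negPart_nonneg X)
  have hsub : X⁺ - X⁻ = X := CFC.posPart_sub_negPart X hX
  have hTpos : T X⁺ = X⁺ :=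
    h.map_eq_self_of_map_sub hpos hneg (CFC.posPart_mul_negPart X) (by rw [hsub, hTX])
  have hTneg : T X⁻ = X⁻ := by
    rw [← sub_sub_cancel X⁺ X⁻, hsub, map_sub, hTpos, hTX]
  rw [← hsub]
  exact sub_mem (Submodule.subset_span ⟨hpos, hTpos⟩) (Submodule.subset_span ⟨hneg, hTneg⟩)

end RCLike

section Complex

open scoped ComplexStarModule

variable {ι κ : Type*} [Fintype ι] [DecidableEq ι] [Fintype κ]
  {T : Matrix ι ι ℂ →ₗ[ℂ] Matrix ι ι ℂ} {M : κ → Matrix ι ι ℂ} {ρ R X Y : Matrix ι ι ℂ}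

theorem mem_span_posSemidef (h : IsKrausRep T M) (hX : T X = X) :
    X ∈ Submodule.span ℂ {σ : Matrix ι ι ℂ | σ.PosSemidef ∧ T σ = σ} := by
  have hre : T (ℜ X) = ℜ X := by
    rw [realPart_apply_coe, LinearMap.map_smul_of_tower, map_add, star_eq_conjTranspose,
      h.map_conjTranspose, hX]
  have him : T (ℑ X) = ℑ X := by
    rw [imaginaryPart_apply_coe, map_smul, LinearMap.map_smul_of_tower, map_sub,
      star_eq_conjTranspose, h.map_conjTranspose, hX]
  rw [← realPart_add_I_smul_imaginaryPart X]
  exact add_mem (h.mem_span_posSemidef_of_isHermitian (ℜ X).2 hre)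
    (Submodule.smul_mem _ _ (h.mem_span_posSemidef_of_isHermitian (ℑ X).2 him))

theorem map_support_mul (h : IsKrausRep T M) (hρ : ρ.PosSemidef) (hTρ : T ρ = ρ)
    (hR : IsMoorePenrose ρ R) (hX : T X = X) : T (ρ * R * X) = ρ * R * X :=
  LinearMap.eqOn_span (f := T ∘ₗ LinearMap.mulLeft ℂ (ρ * R)) (g := LinearMap.mulLeft ℂ (ρ * R))
    (fun _ hσ => h.map_support_mul_of_posSemidef hρ hTρ hR hσ.1 hσ.2) (h.mem_span_posSemidef hX)

theorem map_mul_support (h : IsKrausRep T M) (hρ : ρ.PosSemidef) (hTρ : T ρ = ρ)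
    (hR : IsMoorePenrose ρ R) (hX : T X = X) : T (X * R * ρ) = X * R * ρ := by
  have hP : (ρ * R)ᴴ = ρ * R := hR.isSelfAdjoint_left
  have hadj : (ρ * R * Xᴴ)ᴴ = X * R * ρ := by
    rw [conjTranspose_mul, hP, conjTranspose_conjTranspose,
      (hR.commute hρ.isHermitian).eq, mul_assoc]
  rw [← hadj, h.map_conjTranspose_eq_self
    (h.map_support_mul hρ hTρ hR (h.map_conjTranspose_eq_self hX))]

theorem mul_mul_pinv_mul_eq (h : IsKrausRep T M) (hρ : ρ.PosSemidef) (hTρ : T ρ = ρ)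
    (hR : IsMoorePenrose ρ R) (hX : T X = X) (k : κ) :
    M k * (X * R) * ρ = X * R * M k * ρ :=
  (h.map_mul_eq_self_iff hρ hTρ).1 (h.map_mul_support hρ hTρ hR hX) k

theorem map_mul_pinv_mul (h : IsKrausRep T M) (hρ : ρ.PosSemidef) (hTρ : T ρ = ρ)
    (hR : IsMoorePenrose ρ R) (hX : T X = X) (hY : T Y = Y) : T (X * R * Y) = X * R * Y := by
  have hRH : Rᴴ = R := hR.isSelfAdjoint hρ.isHermitian
  have hXRY : X * R * ρ * (Yᴴ * R)ᴴ = X * R * Y :=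
    calc X * R * ρ * (Yᴴ * R)ᴴ = X * (R * ρ * R) * Y := by
          rw [conjTranspose_mul, conjTranspose_conjTranspose, hRH]; simp only [mul_assoc]
      _ = X * R * Y := by rw [hR.mul_mul_right]
  rw [← hXRY]
  exact h.map_mul_mul_conjTranspose hρ.isHermitian hTρ (h.mul_mul_pinv_mul_eq hρ hTρ hR hX)
    (h.mul_mul_pinv_mul_eq hρ hTρ hR (h.map_conjTranspose_eq_self hY))

theorem map_mul_mul_pinv (h : IsKrausRep T M) (hρ : ρ.PosSemidef) (hTρ : T ρ = ρ)
    (hR : IsMoorePenrose ρ R) (hX : T X = X) : T (ρ * X * R) = ρ * X * R := by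
  have hXR : X * R * (ρ * R) = X * R := by
    rw [mul_assoc, ← mul_assoc R, hR.mul_mul_right]
  have hfix : T ((X * R)ᴴ * ρ) = (X * R)ᴴ * ρ :=
    h.map_conjTranspose_mul hρ hTρ hR hXR (h.map_mul_support hρ hTρ hR hX)
  simpa only [conjTranspose_mul, conjTranspose_conjTranspose, hρ.isHermitian.eq, mul_assoc] using
    h.map_conjTranspose_eq_self hfix

end Complex

end IsKrausRep

theorem stmt5_general {ι : Type*} [Fintype ι] [DecidableEq ι] {W : Set (Matrix ι ι ℂ)}
    {ρ : Matrix ι ι ℂ} (hρ : ρ.PosSemidef) {T : Matrix ι ι ℂ →ₗ[ℂ] Matrix ι ι ℂ} (hT : IsCPTP T)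
    (hTρ : T ρ = ρ) (hW : W ⊆ fixSet T) :
    (Fdist ρ W : Set (Matrix ι ι ℂ)) ⊆ fixSet T := by
  obtain ⟨m, M, hTM, hM⟩ := hT
  have h : IsKrausRep T M := ⟨hTM, hM⟩
  have hR : IsMoorePenrose ρ (mpinv ρ) := isMoorePenrose_mpinv hρ.isHermitian
  have hB : (msqrt ρ).PosSemidef := posSemidef_msqrt hρ
  have hmodular (X : Matrix ι ι ℂ) (hX : X ∈ LinearMap.eqLocus T LinearMap.id) :
      msqrt ρ * msqrt ρ * X * (mpinv (msqrt ρ) * mpinv (msqrt ρ)) ∈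
        LinearMap.eqLocus T LinearMap.id := by
    rw [← mpinv_mul_self hB.isHermitian, msqrt_mul_msqrt hρ]
    exact h.map_mul_mul_pinv hρ hTρ hR hX
  have hle : Fdist ρ W ≤ LinearMap.eqLocus T LinearMap.id := sInf_le
    ⟨hW, fun X hX => h.map_conjTranspose_eq_self hX,
      fun X hX Y hY => h.map_mul_pinv_mul hρ hTρ hR hX hY,
      fun X hX => mul_mul_mem_of_mul_self hB (isMoorePenrose_mpinv hB.isHermitian) hmodular hX⟩
  exact hle

/-! ### Statement 5 -/

theorem stmt5
    {ι : Type*} [Fintype ι] [DecidableEq ι]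
    (W : Submodule ℂ (Matrix ι ι ℂ)) (ρ : Matrix ι ι ℂ) (hρ : IsDensity ρ)
    (hρW : ρ ∈ W) (hsupp : msupp ρ = suppSet (W : Set (Matrix ι ι ℂ)))
    (T : Matrix ι ι ℂ →ₗ[ℂ] Matrix ι ι ℂ) (hT : IsCPTP T)
    (hfix : (W : Set (Matrix ι ι ℂ)) ⊆ fixSet T) :
    (Fdist ρ (W : Set (Matrix ι ι ℂ)) : Set (Matrix ι ι ℂ)) ⊆ fixSet T :=
  stmt5_general hρ.1 hT (hfix hρW) hfix

end QDS
end
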